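/- For each integer m ≥ 3, there exists a connected graph G of order m such that χ_la(G ∨ O_2) − χ_la(G) = 3 − m ≤ 0; in particular, the star K(1, m−1) satisfies χ_la(K(1,m−1)) = m and χ_la(K(1,m−1) ∨ O_2) = 3. -/

import Mathlib

open scoped BigOperators

/-- The induced vertex sum: sum of labels of edges incident to `v`. -/
noncomputable def vertexSum {V : Type*} (G : SimpleGraph V) (f : Sym2 V → ℕ) (v : V) : ℕ :=
  ∑ᶠ e ∈ G.incidenceSet v, f e

/-- `f` is a local antimagic labeling of `G`: a bijection from the edge set onto
`{1, …, |E(G)|}` such that adjacent vertices get distinct induced sums. -/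
def IsLocalAntimagic {V : Type*} (G : SimpleGraph V) (f : Sym2 V → ℕ) : Prop :=
  Set.BijOn f G.edgeSet (Set.Icc 1 G.edgeSet.ncard) ∧
  ∀ u v, G.Adj u v → vertexSum G f u ≠ vertexSum G f v

/-- Number of distinct induced vertex labels of the labeling `f`. -/
noncomputable def colorCount {V : Type*} (G : SimpleGraph V) (f : Sym2 V → ℕ) : ℕ :=
  (Set.range (vertexSum G f)).ncard

/-- The local antimagic chromatic number. -/
noncomputable def chiLA {V : Type*} (G : SimpleGraph V) : ℕ :=
  sInf { n | ∃ f, IsLocalAntimagic G f ∧ colorCount G f = n }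

/-- The join `G ∨ Oₙ` of `G` with the empty graph on `n` vertices. -/
def joinEmpty {V : Type*} (G : SimpleGraph V) (n : ℕ) : SimpleGraph (V ⊕ Fin n) :=
  SimpleGraph.fromRel (fun x y =>
    (∃ a b, x = Sum.inl a ∧ y = Sum.inl b ∧ G.Adj a b) ∨ (x.isLeft ∧ y.isRight))

/-!
In any local antimagic labelling of `K(1, k)` all vertex sums are distinct: those of the leaves are
the labels, and the one of the centre differs from each of them.

The triangles of `K(1, k) ∨ O₂ = K(1, 2, k)` force three colours. Three suffice if the three labels
at each leaf have the same sum, and likewise the labels at either vertex of `O₂`. Arrange the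
numbers `1, …, 6t + 3` in triples which, relative to the average `3t + 2`, consist of a multiple of
`3`, a negative and a positive non-multiple and have sum `0`. Reversing the order of the triples
negates all entries, so permuting them suitably balances the rows of the array except in the middle
triple, which puts `g t` in the first row and `-g t` in the second, where `g` enumerates the
non-multiples of `3`. Permuting the triples `t ± s` as well moves `g (t - s) + g (t + s)`, about
`2 g t`, from the first row to the third, so that the first two rows almost agree. For odd
`k = 2t + 1` take `s = 1` and use the two remaining labels to make them agree. For even `k = 2t`
take `s = 2`, where they do agree, and drop the largest label: the rest of its triple labels the
edges from the centre to `O₂`.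
-/

section Array

/-- The increasing enumeration `1, 2, 4, 5, 7, …` of the positive integers not divisible by `3`,
from which the lower two rows of `baseColumn` are built. -/
def nonMultipleOfThree (n : ℕ) : ℕ :=
  3 * n / 2 + 1

/-- The `i`-th column, for `i = 0, …, 2t`, of a `3 × (2t + 1)` array filled with the labels
`1, …, 6t + 3`. After subtracting the average `3t + 2`, the top row consists of the multiples of `3`
and the other two of the negative and the positive non-multiples. Reversing the order of the columns
negates this array and exchanges its lower two rows. -/
def baseColumn (t i : ℕ) : Fin 3 → ℕ :=
  ![3 * i + 2, 3 * t + 2 - nonMultipleOfThree i, 3 * t + 2 + nonMultipleOfThree (2 * t - i)]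

/-- The rearrangement of the `i`-th column of the base array. It makes the entries of the opposite
columns `i` and `2t - i` average to `3t + 2` in every row; the exceptions are the middle column `t`
and the pair `t ± s`, whose effects on the first two rows almost cancel for small `s`. -/
def columnPerm (t s i : ℕ) : Equiv.Perm (Fin 3) :=
  if i = t then Equiv.swap 0 2
  else if i + s = t ∨ i = t + s then Equiv.swap 0 1
  else if i < t then 1
  else Equiv.swap 1 2

/-- The `i`-th column of the rearranged array, whose entries label the edges of `K(1, 2, k)`. -/
def balancedColumn (t s i : ℕ) (r : Fin 3) : ℕ :=
  baseColumn t i (columnPerm t s i r)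

variable {t s i j : ℕ}

lemma nonMultipleOfThree_sub_one_add (ht : 1 ≤ t) :
    nonMultipleOfThree (t - 1) + nonMultipleOfThree (t + 1) + 1 =
      2 * nonMultipleOfThree t + 2 * (t % 2) := by
  obtain ⟨n, rfl⟩ := Nat.exists_eq_add_of_le' ht
  simp only [nonMultipleOfThree, Nat.add_sub_cancel]
  obtain ⟨k, rfl | rfl⟩ := Nat.even_or_odd' n <;> omega

lemma nonMultipleOfThree_sub_two_add (ht : 2 ≤ t) :
    nonMultipleOfThree (t - 2) + nonMultipleOfThree (t + 2) = 2 * nonMultipleOfThree t := by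
  obtain ⟨n, rfl⟩ := Nat.exists_eq_add_of_le' ht
  simp only [nonMultipleOfThree, Nat.add_sub_cancel]
  obtain ⟨k, rfl | rfl⟩ := Nat.even_or_odd' n <;> omega

lemma nonMultipleOfThree_le_two_mul (ht : 1 ≤ t) : nonMultipleOfThree t ≤ 2 * t := by
  simp only [nonMultipleOfThree]
  omega

lemma lt_nonMultipleOfThree (t : ℕ) : t < nonMultipleOfThree t := by
  simp only [nonMultipleOfThree]
  omega

lemma baseColumn_inj {r r' : Fin 3} (hi : i ≤ 2 * t) (hj : j ≤ 2 * t)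
    (h : baseColumn t i r = baseColumn t j r') : i = j ∧ r = r' := by
  fin_cases r <;> fin_cases r' <;>
    simp only [baseColumn, nonMultipleOfThree, Fin.zero_eta, Fin.mk_one, Fin.reduceFinMk,
      Matrix.cons_val] at h <;> lia

lemma baseColumn_mem_Icc (hi : i ≤ 2 * t) (r : Fin 3) :
    baseColumn t i r ∈ Set.Icc 1 (6 * t + 3) := by
  fin_cases r <;>
    simp only [baseColumn, nonMultipleOfThree, Fin.zero_eta, Fin.mk_one, Fin.reduceFinMk,
      Matrix.cons_val, Set.mem_Icc] <;> omega

lemma sum_baseColumn (hi : i ≤ 2 * t) : ∑ r, baseColumn t i r = 9 * t + 6 := by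
  simp only [baseColumn, nonMultipleOfThree, Fin.sum_univ_three, Matrix.cons_val]
  omega

lemma balancedColumn_injective (t s : ℕ) :
    Function.Injective fun x : Fin (2 * t + 1) × Fin 3 => balancedColumn t s x.1 x.2 := by
  rintro ⟨i, r⟩ ⟨j, r'⟩ h
  obtain ⟨hij, hr⟩ := baseColumn_inj (by lia) (by lia) h
  obtain rfl : i = j := Fin.ext hij
  exact Prod.ext rfl ((columnPerm t s i).injective hr)

lemma balancedColumn_mem_Icc (s : ℕ) (hi : i ≤ 2 * t) (r : Fin 3) :
    balancedColumn t s i r ∈ Set.Icc 1 (6 * t + 3) :=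
  baseColumn_mem_Icc hi _

lemma sum_balancedColumn (s : ℕ) (hi : i ≤ 2 * t) : ∑ r, balancedColumn t s i r = 9 * t + 6 :=
  (Equiv.sum_comp (columnPerm t s i) (baseColumn t i)).trans (sum_baseColumn hi)

lemma balancedColumn_zero_two (ht : 1 ≤ t) : balancedColumn t s 0 2 = 6 * t + 3 := by
  simp only [balancedColumn, columnPerm]
  split_ifs <;> simp [baseColumn, nonMultipleOfThree, Equiv.swap_apply_of_ne_of_ne] <;> omega

lemma sum_range_two_mul_add_one {M : Type*} [AddCommMonoid M] (f : ℕ → M) (t : ℕ) :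
    ∑ i ∈ Finset.range (2 * t + 1), f i = ∑ i ∈ Finset.range t, (f i + f (2 * t - i)) + f t := by
  have upper_half : ∑ i ∈ Finset.range t, f (t + 1 + i) = ∑ i ∈ Finset.range t, f (2 * t - i) := by
    rw [← Finset.sum_range_reflect]
    refine Finset.sum_congr rfl fun i hi => congrArg f ?_
    have := Finset.mem_range.mp hi
    omega
  rw [show 2 * t + 1 = t + 1 + t by ring, Finset.sum_range_add, Finset.sum_range_succ, upper_half,
    Finset.sum_add_distrib, add_right_comm]

lemma sum_balancedColumn_zero (hs : 1 ≤ s) (hst : s ≤ t) :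
    ∑ i ∈ Finset.range (2 * t + 1), balancedColumn t s i 0 +
        (nonMultipleOfThree (t - s) + nonMultipleOfThree (t + s)) =
      (2 * t + 1) * (3 * t + 2) + nonMultipleOfThree t := by
  set g := nonMultipleOfThree
  have opposite : ∀ i ∈ Finset.range t, balancedColumn t s i 0 + balancedColumn t s (2 * t - i) 0 +
      (if i = t - s then g (t - s) + g (t + s) else 0) = 2 * (3 * t + 2) := by
    intro i hi
    rw [Finset.mem_range] at hi
    obtain rfl | hne := eq_or_ne i (t - s)
    · rw [show 2 * t - (t - s) = t + s by omega]
      simp only [balancedColumn, columnPerm, if_neg (show t - s ≠ t by omega),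
        if_neg (show t + s ≠ t by omega), Nat.sub_add_cancel hst, true_or, or_true, if_true,
        Equiv.swap_apply_left, baseColumn, Matrix.cons_val, g, nonMultipleOfThree]
      omega
    · simp only [balancedColumn, columnPerm, g]
      split_ifs <;> simp [baseColumn, Equiv.swap_apply_of_ne_of_ne] <;> omega
  have middle : balancedColumn t s t 0 = 3 * t + 2 + g t := by
    simp [balancedColumn, columnPerm, baseColumn, g, two_mul]
  have hcorr : ∑ i ∈ Finset.range t, (if i = t - s then g (t - s) + g (t + s) else 0) =
      g (t - s) + g (t + s) := by
    rw [Finset.sum_ite_eq', if_pos (Finset.mem_range.mpr (by omega))]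
  have hsum := Finset.sum_congr rfl opposite
  rw [Finset.sum_add_distrib, hcorr, Finset.sum_const, Finset.card_range, smul_eq_mul] at hsum
  rw [sum_range_two_mul_add_one, middle]
  linarith

lemma sum_balancedColumn_one (hs : 1 ≤ s) :
    ∑ i ∈ Finset.range (2 * t + 1), balancedColumn t s i 1 + nonMultipleOfThree t =
      (2 * t + 1) * (3 * t + 2) := by
  have opposite : ∀ i ∈ Finset.range t,
      balancedColumn t s i 1 + balancedColumn t s (2 * t - i) 1 = 2 * (3 * t + 2) := by
    intro i hi
    rw [Finset.mem_range] at hi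
    simp only [balancedColumn, columnPerm]
    split_ifs <;> simp [baseColumn, nonMultipleOfThree, Equiv.swap_apply_of_ne_of_ne] <;> omega
  have middle : balancedColumn t s t 1 + nonMultipleOfThree t = 3 * t + 2 := by
    simp [balancedColumn, columnPerm, baseColumn, nonMultipleOfThree, Equiv.swap_apply_of_ne_of_ne]
    omega
  rw [sum_range_two_mul_add_one, Finset.sum_congr rfl opposite, Finset.sum_const, Finset.card_range,
    smul_eq_mul, add_assoc, middle]
  ring

lemma sum_balancedColumn_two (hs : 1 ≤ s) (hst : s ≤ t) :
    ∑ i ∈ Finset.range (2 * t + 1), balancedColumn t s i 2 =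
      (2 * t + 1) * (3 * t + 2) + (nonMultipleOfThree (t - s) + nonMultipleOfThree (t + s)) := by
  have total : ∑ i ∈ Finset.range (2 * t + 1), ∑ r, balancedColumn t s i r =
      (2 * t + 1) * (9 * t + 6) := by
    rw [Finset.sum_congr rfl fun i hi => sum_balancedColumn s (Finset.mem_range_succ_iff.mp hi)]
    simp
  simp only [Fin.sum_univ_three, Finset.sum_add_distrib] at total
  linarith [sum_balancedColumn_zero hs hst, sum_balancedColumn_one hs (t := t)]

end Array

section Table

/-- A labelling of the edges of `K(1, 2, k) = K(1, k) ∨ O₂` by `1, …, 3k + 2` with vertex sums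
`T < U < W` at the leaves, the two vertices of `O₂` and the centre. The edges at leaf `i` that lead
to `O₂` have labels `A i 0` and `A i 1`, the one to the centre `A i 2`; the edges between the centre
and `O₂` have labels `p 0` and `p 1`. -/
structure IsThreeColorTable {k : ℕ} (A : Fin k → Fin 3 → ℕ) (p : Fin 2 → ℕ) (T U W : ℕ) :
    Prop where
  injective : Function.Injective (Sum.elim (fun x : Fin k × Fin 3 => A x.1 x.2) p)
  mem_Icc : ∀ x, Sum.elim (fun x : Fin k × Fin 3 => A x.1 x.2) p x ∈ Set.Icc 1 (3 * k + 2)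
  leaf_sum : ∀ i, ∑ r, A i r = T
  new_sum : ∀ r : Fin 2, p r + ∑ i, A i r.castSucc = U
  center_sum : ∑ r, p r + ∑ i, A i 2 = W
  leaf_lt_new : T < U
  new_lt_center : U < W

lemma isThreeColorTable_two :
    IsThreeColorTable ![![7, 3, 1], ![2, 4, 5]] ![6, 8] 11 15 20 where
  injective := by decide
  mem_Icc := by simp only [Set.mem_Icc]; decide
  leaf_sum := by decide
  new_sum := by decide
  center_sum := by decide
  leaf_lt_new := by decide
  new_lt_center := by decide

-- For `s = 1` the first two row sums differ by one; the two largest labels make up for this.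
lemma exists_isThreeColorTable_odd {t : ℕ} (ht : 1 ≤ t) :
    ∃ (A : Fin (2 * t + 1) → Fin 3 → ℕ) (p : Fin 2 → ℕ) (T U W : ℕ),
      IsThreeColorTable A p T U W := by
  have row₀ := sum_balancedColumn_zero le_rfl ht
  have row₁ := sum_balancedColumn_one (t := t) le_rfl
  have row₂ := sum_balancedColumn_two le_rfl ht
  have outer := nonMultipleOfThree_sub_one_add ht
  have middle := nonMultipleOfThree_le_two_mul ht
  have average : 13 * t ≤ (2 * t + 1) * (3 * t + 2) := by nlinarith
  simp only [Finset.sum_range] at row₀ row₁ row₂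
  have rows_differ : ∑ i : Fin (2 * t + 1), balancedColumn t 1 i 0 + 2 * (t % 2) =
      ∑ i : Fin (2 * t + 1), balancedColumn t 1 i 1 + 1 := by
    omega
  have entry_mem (i : Fin (2 * t + 1)) := balancedColumn_mem_Icc 1 (Fin.is_le i)
  simp only [Set.mem_Icc] at entry_mem
  refine ⟨fun i => balancedColumn t 1 i, ![6 * t + 4 + t % 2, 6 * t + 5 - t % 2], 9 * t + 6,
    ∑ i : Fin (2 * t + 1), balancedColumn t 1 i 1 + (6 * t + 5 - t % 2), _,
    ?_, ?_, fun i => sum_balancedColumn 1 (by omega), ?_, rfl, ?_, ?_⟩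
  · refine (balancedColumn_injective t 1).sumElim ?_ ?_
    · intro r r' h
      fin_cases r <;> fin_cases r' <;> simp at h ⊢ <;> omega
    · rintro ⟨i, r⟩ r' h
      have := entry_mem i r
      fin_cases r' <;> simp at h <;> omega
  · rintro (⟨i, r⟩ | r)
    · have := entry_mem i r
      simp only [Sum.elim_inl, Set.mem_Icc]
      omega
    · fin_cases r <;> simp <;> omega
  · rw [Fin.forall_fin_two]
    have parity : 6 * t + 5 - t % 2 + t % 2 = 6 * t + 5 := by omega
    simp only [Matrix.cons_val, Fin.castSucc_zero, Fin.castSucc_one]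
    exact ⟨by linarith [rows_differ, parity], add_comm _ _⟩
  · omega
  · simp only [Fin.sum_univ_two, Matrix.cons_val]
    omega

/-- The positions in a `3 × (k + 1)` array of the labels of the edges of `K(1, 2, k)`: all but the
last entry of column `0`. The other two entries of column `0` belong to the edges between the centre
and `O₂`. -/
def columnZeroIndex (k : ℕ) : Fin k × Fin 3 ⊕ Fin 2 → Fin (k + 1) × Fin 3 :=
  Sum.elim (fun x => (x.1.succ, x.2)) fun r => (0, r.castSucc)

lemma columnZeroIndex_injective (k : ℕ) : Function.Injective (columnZeroIndex k) := by
  refine Function.Injective.sumElim ?_ ?_ ?_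
  · exact (Fin.succ_injective k).prodMap Function.injective_id
  · exact (Prod.mk_right_injective 0).comp (Fin.castSucc_injective 2)
  · exact fun x r h => Fin.succ_ne_zero x.1 (congrArg Prod.fst h)

lemma columnZeroIndex_ne {k : ℕ} (x : Fin k × Fin 3 ⊕ Fin 2) : columnZeroIndex k x ≠ (0, 2) := by
  intro h
  obtain ⟨i, r⟩ | r := x
  · exact Fin.succ_ne_zero i (congrArg Prod.fst h)
  · exact (Fin.castSucc_lt_last r).ne (congrArg Prod.snd h)

lemma isThreeColorTable_of_row_sum_eq {k T U W : ℕ} {B : Fin (k + 1) × Fin 3 → ℕ}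
    (injective : Function.Injective B) (mem_Icc : ∀ x, B x ∈ Set.Icc 1 (3 * k + 3))
    (largest : B (0, 2) = 3 * k + 3) (column_sum : ∀ i, ∑ r, B (i, r) = T)
    (row_sum : ∀ r : Fin 2, ∑ i, B (i, r.castSucc) = U)
    (last_row_sum : ∑ i, B (i, 2) + T = W + 2 * B (0, 2)) (hTU : T < U) (hUW : U < W) :
    IsThreeColorTable (fun i r => B (i.succ, r)) (fun r => B (0, r.castSucc)) T U W := by
  have labels_eq : Sum.elim (fun x : Fin k × Fin 3 => B (x.1.succ, x.2))
      (fun r : Fin 2 => B (0, r.castSucc)) = B ∘ columnZeroIndex k := by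
    ext (x | r) <;> rfl
  refine ⟨labels_eq ▸ injective.comp (columnZeroIndex_injective k), fun x => ?_,
    fun i => column_sum i.succ, fun r => ?_, ?_, hTU, hUW⟩
  · have not_largest := (injective.ne (columnZeroIndex_ne x)).trans_eq largest
    obtain ⟨one_le, le_largest⟩ := mem_Icc (columnZeroIndex k x)
    rw [labels_eq]
    exact ⟨one_le, Nat.le_of_lt_succ (le_largest.lt_of_ne not_largest)⟩
  · rw [← row_sum r, Fin.sum_univ_succ]
  · have := column_sum 0
    rw [Fin.sum_univ_three] at this
    rw [Fin.sum_univ_succ] at last_row_sum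
    rw [Fin.sum_univ_two, Fin.castSucc_zero, Fin.castSucc_one]
    omega

-- For `s = 2` the first two row sums agree, and the largest label `6t + 3` is in column `0`.
lemma exists_isThreeColorTable_even {t : ℕ} (ht : 2 ≤ t) :
    ∃ (A : Fin (2 * t) → Fin 3 → ℕ) (p : Fin 2 → ℕ) (T U W : ℕ),
      IsThreeColorTable A p T U W := by
  have row₀ := sum_balancedColumn_zero one_le_two ht
  have row₁ := sum_balancedColumn_one (t := t) one_le_two
  have row₂ := sum_balancedColumn_two one_le_two ht
  have outer := nonMultipleOfThree_sub_two_add ht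
  have middle_le := nonMultipleOfThree_le_two_mul (one_le_two.trans ht)
  have lt_middle := lt_nonMultipleOfThree t
  have average : 12 * t + 7 ≤ (2 * t + 1) * (3 * t + 2) := by nlinarith
  have largest : balancedColumn t 2 0 2 = 3 * (2 * t) + 3 :=
    (balancedColumn_zero_two (one_le_two.trans ht)).trans (by ring)
  simp only [Finset.sum_range] at row₀ row₁ row₂
  have row_sum : ∀ r : Fin 2, ∑ i : Fin (2 * t + 1), balancedColumn t 2 i r.castSucc =
      ∑ i : Fin (2 * t + 1), balancedColumn t 2 i 1 := by
    refine Fin.forall_fin_two.mpr ⟨?_, rfl⟩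
    rw [Fin.castSucc_zero]
    omega
  have last_row_sum : ∑ i : Fin (2 * t + 1), balancedColumn t 2 i 2 + (9 * t + 6) =
      (2 * t + 1) * (3 * t + 2) + 2 * nonMultipleOfThree t - 3 * t +
        2 * balancedColumn t 2 0 2 := by
    omega
  refine ⟨_, _, _, _, _, isThreeColorTable_of_row_sum_eq (balancedColumn_injective t 2)
    (fun x => ?_) largest (fun i => sum_balancedColumn 2 (Fin.is_le i)) row_sum last_row_sum ?_ ?_⟩
  · rw [show 3 * (2 * t) + 3 = 6 * t + 3 by ring]
    exact balancedColumn_mem_Icc 2 (Fin.is_le x.1) x.2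
  · omega
  · omega

lemma exists_isThreeColorTable {k : ℕ} (hk : 2 ≤ k) :
    ∃ (A : Fin k → Fin 3 → ℕ) (p : Fin 2 → ℕ) (T U W : ℕ), IsThreeColorTable A p T U W := by
  obtain ⟨t, rfl | rfl⟩ := Nat.even_or_odd' k
  · obtain rfl | ht := eq_or_lt_of_le (show 1 ≤ t by omega)
    · exact ⟨_, _, _, _, _, isThreeColorTable_two⟩
    · exact exists_isThreeColorTable_even ht
  · exact exists_isThreeColorTable_odd (by omega)

end Table

section Labeling

variable {V W E : Type*} {G : SimpleGraph V} {H : SimpleGraph W}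

lemma chiLA_eq {n : ℕ} (exists_eq : ∃ f, IsLocalAntimagic G f ∧ colorCount G f = n)
    (le_colorCount : ∀ f, IsLocalAntimagic G f → n ≤ colorCount G f) : chiLA G = n := by
  refine IsLeast.csInf_eq ⟨exists_eq, ?_⟩
  rintro _ ⟨f, hf, rfl⟩
  exact le_colorCount f hf

lemma IsLocalAntimagic.card_le_colorCount [Finite V] {f : Sym2 V → ℕ} (hf : IsLocalAntimagic G f)
    {s : Finset V} (hs : G.IsClique s) : s.card ≤ colorCount G f := by
  have hinj : Set.InjOn (vertexSum G f) s := fun u hu v hv huv =>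
    by_contra fun hne => hf.2 u v (hs hu hv hne) huv
  rw [← Set.ncard_coe_finset, ← hinj.ncard_image]
  exact Set.ncard_le_ncard (Set.image_subset_range _ _) (Set.finite_range _)

lemma vertexSum_eq_sum_filter [Fintype E] [DecidableEq V] {φ : E → Sym2 V}
    (hφ : Set.BijOn φ Set.univ G.edgeSet) (f : Sym2 V → ℕ) (v : V) :
    vertexSum G f v = ∑ e with v ∈ φ e, f (φ e) := by
  have incident : Set.BijOn φ {e | v ∈ φ e} (G.incidenceSet v) := by
    rw [← Set.univ_inter {e | v ∈ φ e}]
    exact hφ.inter_mapsTo (fun e he => he) fun e he => he.2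
  rw [vertexSum, ← finsum_mem_eq_of_bijOn φ incident fun e _ => rfl, ← finsum_mem_coe_finset]
  simp only [Finset.coe_filter, Finset.mem_univ, true_and]

lemma exists_labeling_of_bijOn [Fintype E] [DecidableEq V] {φ : E → Sym2 V}
    (hφ : Set.BijOn φ Set.univ G.edgeSet) {ℓ : E → ℕ} (injective : Function.Injective ℓ)
    (mem_Icc : ∀ e, ℓ e ∈ Set.Icc 1 (Fintype.card E)) :
    ∃ f : Sym2 V → ℕ, Set.BijOn f G.edgeSet (Set.Icc 1 G.edgeSet.ncard) ∧
      ∀ v, vertexSum G f v = ∑ e with v ∈ φ e, ℓ e := by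
  have hφ' : Function.Injective φ := Set.injOn_univ.mp hφ.injOn
  refine ⟨Function.extend φ ℓ 0, ?_, fun v => ?_⟩
  · have card_edges : G.edgeSet.ncard = Fintype.card E := by
      rw [← hφ.image_eq, hφ.injOn.ncard_image, Set.ncard_univ, Nat.card_eq_fintype_card]
    have range_eq : Set.range ℓ = Set.Icc 1 (Fintype.card E) := by
      refine Set.eq_of_subset_of_ncard_le (Set.range_subset_iff.mpr mem_Icc) ?_ (Set.finite_Icc _ _)
      rw [Set.ncard_range_of_injective injective, Nat.card_eq_fintype_card, Set.ncard_Icc_nat,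
        Nat.add_sub_cancel]
    rw [card_edges, ← hφ.image_eq, ← Set.bijOn_comp_iff hφ.injOn, Function.extend_comp hφ',
      ← range_eq, ← Set.image_univ]
    exact injective.injOn.bijOn_image
  · simp only [vertexSum_eq_sum_filter hφ, hφ'.extend_apply]

lemma bijOn_edgeSet (φ : G ≃g H) : Set.BijOn (Sym2.map φ) G.edgeSet H.edgeSet := by
  have surjective : Function.Surjective (Sym2.map φ) := fun e =>
    ⟨Sym2.map φ.symm e, by simp [Sym2.map_map]⟩
  refine ⟨fun e => φ.map_mem_edgeSet_iff.mpr, (Sym2.map.injective φ.injective).injOn, ?_⟩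
  intro e he
  obtain ⟨e, rfl⟩ := surjective e
  exact ⟨e, φ.map_mem_edgeSet_iff.mp he, rfl⟩

lemma vertexSum_comp_map (φ : G ≃g H) (f : Sym2 W → ℕ) (v : V) :
    vertexSum G (f ∘ Sym2.map φ) v = vertexSum H f (φ v) := by
  have mem_map (e : Sym2 V) : φ v ∈ Sym2.map φ e ↔ v ∈ e := by
    simp [Sym2.mem_map]
  have incident : Set.BijOn (Sym2.map φ) (G.incidenceSet v) (H.incidenceSet (φ v)) :=
    (bijOn_edgeSet φ).inter_mapsTo (fun e he => (mem_map e).mpr he) fun e he => (mem_map e).mp he.2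
  exact finsum_mem_eq_of_bijOn _ incident fun e _ => rfl

lemma IsLocalAntimagic.comp_map {f : Sym2 W → ℕ} (hf : IsLocalAntimagic H f) (φ : G ≃g H) :
    IsLocalAntimagic G (f ∘ Sym2.map φ) := by
  have edges := bijOn_edgeSet φ
  refine ⟨?_, fun u v huv => ?_⟩
  · rw [← edges.injOn.ncard_image, edges.image_eq]
    exact hf.1.comp edges
  · simp only [vertexSum_comp_map]
    exact hf.2 _ _ (φ.map_adj_iff.mpr huv)

lemma colorCount_comp_map (φ : G ≃g H) (f : Sym2 W → ℕ) :
    colorCount G (f ∘ Sym2.map φ) = colorCount H f := by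
  rw [colorCount, funext (vertexSum_comp_map φ f)]
  exact congrArg Set.ncard (φ.surjective.range_comp (vertexSum H f))

lemma chiLA_congr (φ : G ≃g H) : chiLA G = chiLA H := by
  refine congrArg sInf (Set.ext fun n => ⟨?_, ?_⟩) <;> rintro ⟨f, hf, rfl⟩
  · exact ⟨_, hf.comp_map φ.symm, colorCount_comp_map φ.symm f⟩
  · exact ⟨_, hf.comp_map φ, colorCount_comp_map φ f⟩

end Labeling

section Join

variable {V W E : Type*} {G : SimpleGraph V} {H : SimpleGraph W} {n : ℕ}

@[simp]
lemma joinEmpty_adj_inl_inl {u v : V} :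
    (joinEmpty G n).Adj (Sum.inl u) (Sum.inl v) ↔ G.Adj u v := by
  simp only [joinEmpty, SimpleGraph.fromRel_adj, Sum.inl.injEq, Sum.isLeft_inl, Sum.isRight_inl]
  have := G.adj_comm u v
  have := G.ne_of_adj (a := u) (b := v)
  aesop

@[simp]
lemma joinEmpty_adj_inl_inr (v : V) (r : Fin n) :
    (joinEmpty G n).Adj (Sum.inl v) (Sum.inr r) := by
  simp [joinEmpty]

@[simp]
lemma joinEmpty_adj_inr_inl (v : V) (r : Fin n) :
    (joinEmpty G n).Adj (Sum.inr r) (Sum.inl v) :=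
  (joinEmpty_adj_inl_inr v r).symm

@[simp]
lemma not_joinEmpty_adj_inr_inr (r r' : Fin n) :
    ¬ (joinEmpty G n).Adj (Sum.inr r) (Sum.inr r') := by
  simp [joinEmpty]

/-- The isomorphism of joins `G ∨ Oₙ ≃ H ∨ Oₙ` induced by an isomorphism `G ≃ H`. -/
def joinEmptyCongr (φ : G ≃g H) (n : ℕ) : joinEmpty G n ≃g joinEmpty H n where
  toEquiv := Equiv.sumCongr φ.toEquiv (Equiv.refl _)
  map_rel_iff' := by
    rintro (u | r) (v | r') <;> simp [φ.map_adj_iff]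

/-- A parametrisation of the edges of `G ∨ Oₙ` by the disjoint union of `E` and `V × Fin n`, given a
parametrisation `φ` of the edges of `G` by `E`. -/
def joinEdge (φ : E → Sym2 V) (n : ℕ) : E ⊕ V × Fin n → Sym2 (V ⊕ Fin n) :=
  Sum.elim (Sym2.map Sum.inl ∘ φ) fun x => s(Sum.inl x.1, Sum.inr x.2)

lemma joinEdge_bijOn {φ : E → Sym2 V} (hφ : Set.BijOn φ Set.univ G.edgeSet) :
    Set.BijOn (joinEdge φ n) Set.univ (joinEmpty G n).edgeSet := by
  refine ⟨?_, Set.injOn_univ.mpr (Function.Injective.sumElim ?_ ?_ ?_), ?_⟩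
  · rintro (e | ⟨v, r⟩) -
    · have := hφ.mapsTo (Set.mem_univ e)
      simp only [joinEdge, Sum.elim_inl, Function.comp_apply]
      generalize φ e = z at this ⊢
      induction z
      simpa using this
    · simp [joinEdge]
  · exact (Sym2.map.injective Sum.inl_injective).comp (Set.injOn_univ.mp hφ.injOn)
  · rintro ⟨v, r⟩ ⟨v', r'⟩ h
    simpa using h
  · rintro e ⟨v, r⟩ h
    have : Sum.inr r ∈ Sym2.map Sum.inl (φ e) := by
      rw [show Sym2.map Sum.inl (φ e) = _ from h]
      exact Sym2.mem_mk_right _ _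
    simp [Sym2.mem_map] at this
  · rintro ⟨u | r, v | r'⟩ h
    · obtain ⟨e, -, he⟩ := hφ.surjOn (G.mem_edgeSet.mpr (joinEmpty_adj_inl_inl.mp h))
      exact ⟨Sum.inl e, trivial, congrArg (Sym2.map Sum.inl) he⟩
    · exact ⟨Sum.inr (u, r'), trivial, rfl⟩
    · exact ⟨Sum.inr (v, r), trivial, Sym2.eq_swap⟩
    · exact (not_joinEmpty_adj_inr_inr r r' h).elim

variable [Fintype V] [DecidableEq V] [Fintype E] {M : Type*} [AddCommMonoid M]

lemma sum_filter_inl_mem_joinEdge (φ : E → Sym2 V) (ℓ : E ⊕ V × Fin n → M) (v : V) :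
    ∑ x with Sum.inl v ∈ joinEdge φ n x, ℓ x =
      ∑ e with v ∈ φ e, ℓ (Sum.inl e) + ∑ r, ℓ (Sum.inr (v, r)) := by
  rw [Finset.sum_filter, Fintype.sum_sum_type, Fintype.sum_prod_type_right]
  simp [joinEdge, Sym2.mem_map, Finset.sum_filter]

lemma sum_filter_inr_mem_joinEdge (φ : E → Sym2 V) (ℓ : E ⊕ V × Fin n → M) (r : Fin n) :
    ∑ x with Sum.inr r ∈ joinEdge φ n x, ℓ x = ∑ v, ℓ (Sum.inr (v, r)) := by
  rw [Finset.sum_filter, Fintype.sum_sum_type, Fintype.sum_prod_type]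
  simp [joinEdge, Sym2.mem_map]

end Join

section Star

variable {k : ℕ}

/-- The star `K(1, k)` with centre `Sum.inl 0`, as a complete bipartite graph. -/
abbrev bipartiteStar (k : ℕ) : SimpleGraph (Fin 1 ⊕ Fin k) :=
  completeBipartiteGraph (Fin 1) (Fin k)

/-- The edge of `K(1, k)` at the leaf `i`. -/
def starEdge (i : Fin k) : Sym2 (Fin 1 ⊕ Fin k) :=
  s(Sum.inl 0, Sum.inr i)

lemma bipartiteStar_connected (k : ℕ) : (bipartiteStar k).Connected := by
  refine SimpleGraph.connected_iff_exists_forall_reachable _ |>.mpr ⟨Sum.inl 0, ?_⟩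
  rintro (c | i)
  · rw [Subsingleton.elim c 0]
  · exact SimpleGraph.Adj.reachable (by simp)

lemma starEdge_bijOn (k : ℕ) : Set.BijOn starEdge Set.univ (bipartiteStar k).edgeSet := by
  refine ⟨fun i _ => by simp [starEdge], fun i _ j _ h => by simpa [starEdge] using h, ?_⟩
  rintro ⟨c | i, d | j⟩ h
  · simp at h
  · exact ⟨j, trivial, by rw [starEdge, Subsingleton.elim c 0]⟩
  · exact ⟨i, trivial, by rw [starEdge, Subsingleton.elim d 0, Sym2.eq_swap]⟩
  · simp at h

lemma sum_filter_center_mem_starEdge {M : Type*} [AddCommMonoid M] (ℓ : Fin k → M) (c : Fin 1) :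
    ∑ i with Sum.inl c ∈ starEdge i, ℓ i = ∑ i, ℓ i := by
  simp [starEdge, Subsingleton.elim c 0]

lemma sum_filter_leaf_mem_starEdge {M : Type*} [AddCommMonoid M] (ℓ : Fin k → M) (i : Fin k) :
    ∑ j with Sum.inr i ∈ starEdge j, ℓ j = ℓ i := by
  simp [starEdge, Finset.sum_filter]

lemma IsLocalAntimagic.colorCount_bipartiteStar {f : Sym2 (Fin 1 ⊕ Fin k) → ℕ}
    (hf : IsLocalAntimagic (bipartiteStar k) f) : colorCount (bipartiteStar k) f = k + 1 := by
  have leaf_sum (i : Fin k) : vertexSum (bipartiteStar k) f (Sum.inr i) = f (starEdge i) := by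
    rw [vertexSum_eq_sum_filter (starEdge_bijOn k), sum_filter_leaf_mem_starEdge]
  have leaf_sum_injective : Function.Injective fun i : Fin k => f (starEdge i) :=
    Set.injOn_univ.mp (hf.1.injOn.comp (starEdge_bijOn k).injOn (starEdge_bijOn k).mapsTo)
  have vertexSum_injective : Function.Injective (vertexSum (bipartiteStar k) f) := by
    rintro (c | i) (d | j) h
    · rw [Subsingleton.elim c d]
    · exact (hf.2 _ _ (by simp) h).elim
    · exact (hf.2 _ _ (by simp) h).elim
    · rw [leaf_sum, leaf_sum] at h
      rw [leaf_sum_injective h]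
  rw [colorCount, Set.ncard_range_of_injective vertexSum_injective, Nat.card_sum, Nat.card_fin,
    Nat.card_fin, add_comm]

lemma exists_isLocalAntimagic_bipartiteStar (hk : 2 ≤ k) :
    ∃ f, IsLocalAntimagic (bipartiteStar k) f := by
  have : Nontrivial (Fin k) := Fin.nontrivial_iff_two_le.mpr hk
  obtain ⟨f, hf, vertexSum_f⟩ := exists_labeling_of_bijOn (starEdge_bijOn k)
    (ℓ := fun i => (i : ℕ) + 1) (fun i j h => Fin.ext (Nat.succ_injective h))
    (fun i => by simp)
  have leaf_lt_center (c : Fin 1) (i : Fin k) :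
      vertexSum (bipartiteStar k) f (Sum.inr i) < vertexSum (bipartiteStar k) f (Sum.inl c) := by
    rw [vertexSum_f, vertexSum_f, sum_filter_leaf_mem_starEdge, sum_filter_center_mem_starEdge]
    obtain ⟨j, hj⟩ := exists_ne i
    exact Finset.single_lt_sum (f := fun i : Fin k => (i : ℕ) + 1) hj (Finset.mem_univ i)
      (Finset.mem_univ j) (Nat.succ_pos j) fun _ _ _ => Nat.zero_le _
  refine ⟨f, hf, ?_⟩
  rintro (c | i) (d | j) h
  · simp at h
  · exact (leaf_lt_center c j).ne'
  · exact (leaf_lt_center d i).ne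
  · simp at h

lemma chiLA_bipartiteStar (hk : 2 ≤ k) : chiLA (bipartiteStar k) = k + 1 := by
  obtain ⟨f, hf⟩ := exists_isLocalAntimagic_bipartiteStar hk
  exact chiLA_eq ⟨f, hf, hf.colorCount_bipartiteStar⟩ fun g hg => hg.colorCount_bipartiteStar.ge

end Star

section JoinStar

variable {k : ℕ} {A : Fin k → Fin 3 → ℕ} {p : Fin 2 → ℕ} {T U W : ℕ}

/-- The position in an `IsThreeColorTable` of the label of an edge of `K(1, k) ∨ O₂`, where the
edges are parametrised by `joinEdge`. -/
def joinStarIndex : Fin k ⊕ (Fin 1 ⊕ Fin k) × Fin 2 → Fin k × Fin 3 ⊕ Fin 2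
  | Sum.inl i => Sum.inl (i, 2)
  | Sum.inr (Sum.inl _, r) => Sum.inr r
  | Sum.inr (Sum.inr i, r) => Sum.inl (i, r.castSucc)

lemma joinStarIndex_injective : Function.Injective (joinStarIndex (k := k)) := by
  rintro (i | ⟨c | i, r⟩) (j | ⟨d | j, r'⟩) h <;>
    simp only [joinStarIndex, Sum.inl.injEq, Sum.inr.injEq, Prod.mk.injEq, Fin.ext_iff,
      Fin.val_castSucc, reduceCtorEq] at h ⊢ <;>
    lia

lemma IsThreeColorTable.exists_labeling (h : IsThreeColorTable A p T U W) :
    ∃ f : Sym2 ((Fin 1 ⊕ Fin k) ⊕ Fin 2) → ℕ,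
      Set.BijOn f (joinEmpty (bipartiteStar k) 2).edgeSet
        (Set.Icc 1 (joinEmpty (bipartiteStar k) 2).edgeSet.ncard) ∧
      vertexSum (joinEmpty (bipartiteStar k) 2) f =
        Sum.elim (Sum.elim (fun _ => W) fun _ => T) fun _ => U := by
  have card_edges : Fintype.card (Fin k ⊕ (Fin 1 ⊕ Fin k) × Fin 2) = 3 * k + 2 := by
    simp only [Fintype.card_sum, Fintype.card_prod, Fintype.card_fin]
    ring
  obtain ⟨f, hf, vertexSum_f⟩ := exists_labeling_of_bijOn (joinEdge_bijOn (starEdge_bijOn k))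
    (h.injective.comp joinStarIndex_injective) (fun e => card_edges ▸ h.mem_Icc (joinStarIndex e))
  refine ⟨f, hf, funext ?_⟩
  rintro ((c | i) | r)
  · rw [vertexSum_f, sum_filter_inl_mem_joinEdge, sum_filter_center_mem_starEdge, add_comm]
    exact h.center_sum
  · rw [vertexSum_f, sum_filter_inl_mem_joinEdge, sum_filter_leaf_mem_starEdge, add_comm]
    exact (Fin.sum_univ_castSucc (A i)).symm.trans (h.leaf_sum i)
  · rw [vertexSum_f, sum_filter_inr_mem_joinEdge, Fintype.sum_sum_type, Fin.sum_univ_one]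
    exact h.new_sum r

lemma IsThreeColorTable.exists_isLocalAntimagic (h : IsThreeColorTable A p T U W) :
    ∃ f, IsLocalAntimagic (joinEmpty (bipartiteStar k) 2) f ∧
      colorCount (joinEmpty (bipartiteStar k) 2) f ≤ 3 := by
  obtain ⟨f, hf, vertexSum_f⟩ := h.exists_labeling
  have hTU := h.leaf_lt_new
  have hUW := h.new_lt_center
  refine ⟨f, ⟨hf, ?_⟩, ?_⟩
  · rintro ((c | i) | r) ((d | j) | r') huv <;> simp [vertexSum_f] at huv ⊢ <;> omega
  · have range_subset : Set.range (vertexSum (joinEmpty (bipartiteStar k) 2) f) ⊆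
        ({T, U, W} : Finset ℕ) := by
      rw [vertexSum_f]
      rintro _ ⟨(c | i) | r, rfl⟩ <;> simp
    refine (Set.ncard_le_ncard range_subset (Finset.finite_toSet _)).trans ?_
    rw [Set.ncard_coe_finset]
    exact Finset.card_le_three

lemma chiLA_joinEmpty_bipartiteStar (hk : 2 ≤ k) : chiLA (joinEmpty (bipartiteStar k) 2) = 3 := by
  obtain ⟨A, p, T, U, W, table⟩ := exists_isThreeColorTable hk
  obtain ⟨f, hf, colorCount_le⟩ := table.exists_isLocalAntimagic
  have triangle : (joinEmpty (bipartiteStar k) 2).IsNClique 3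
      {Sum.inl (Sum.inl 0), Sum.inl (Sum.inr ⟨0, by omega⟩), Sum.inr 0} := by
    simp [SimpleGraph.is3Clique_triple_iff]
  have three_le {g} (hg : IsLocalAntimagic (joinEmpty (bipartiteStar k) 2) g) :
      3 ≤ colorCount (joinEmpty (bipartiteStar k) 2) g :=
    triangle.card_eq ▸ hg.card_le_colorCount triangle.isClique
  exact chiLA_eq ⟨f, hf, colorCount_le.antisymm (three_le hf)⟩ fun _ => three_le

end JoinStar

theorem counterexample_join_O2 (m : ℕ) (hm : 3 ≤ m) :
    chiLA (completeBipartiteGraph (Fin 1) (Fin (m - 1))) = m ∧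
    chiLA (joinEmpty (completeBipartiteGraph (Fin 1) (Fin (m - 1))) 2) = 3 ∧
    ∃ (G : SimpleGraph (Fin m)), G.Connected ∧ chiLA G = m ∧ chiLA (joinEmpty G 2) = 3 := by
  have chiLA_star : chiLA (bipartiteStar (m - 1)) = m :=
    (chiLA_bipartiteStar (by omega)).trans (by omega)
  have chiLA_join : chiLA (joinEmpty (bipartiteStar (m - 1)) 2) = 3 :=
    chiLA_joinEmpty_bipartiteStar (by omega)
  let vertices : Fin m ≃ Fin 1 ⊕ Fin (m - 1) :=
    (finCongr (by omega : m = 1 + (m - 1))).trans finSumFinEquiv.symm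
  let toStar : (bipartiteStar (m - 1)).comap vertices ≃g bipartiteStar (m - 1) :=
    SimpleGraph.Iso.comap vertices _
  exact ⟨chiLA_star, chiLA_join, _, toStar.connected_iff.mpr (bipartiteStar_connected _),
    (chiLA_congr toStar).trans chiLA_star,
    (chiLA_congr (joinEmptyCongr toStar 2)).trans chiLA_join⟩
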